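/- Let ρ ∈ (−1, 1) and n ≥ 1, and let Z̄ = (Z₁ + ⋯ + Zₙ)/n, where Z₁, …, Zₙ are independent and identically distributed copies of Z = XY, with X and V independent standard normal random variables and Y = ρX + √(1 − ρ²)V. Then the law of Z̄ is absolutely continuous with respect to Lebesgue measure, with density p(x) = (n^{(n+1)/2} 2^{(1−n)/2} |x|^{(n−1)/2}) / (√(π(1 − ρ²)) Γ(n/2)) · exp(ρ n x/(1 − ρ²)) · K_{(n−1)/2}(n|x|/(1 − ρ²)) for x ≠ 0, where K_ν(y) = ∫₀^∞ e^{−y cosh t} cosh(νt) dt. -/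

import Mathlib

open MeasureTheory ProbabilityTheory

/-- The modified Bessel function of the second kind,
`K_ν(y) = ∫₀^∞ e^{−y cosh t} cosh(νt) dt`. -/
noncomputable def besselK (ν y : ℝ) : ℝ :=
  ∫ t in Set.Ioi (0 : ℝ), Real.exp (-(y * Real.cosh t)) * Real.cosh (ν * t)

/-- The law of `Z = XY` where `X, V` are independent standard normals and
`Y = ρX + √(1 − ρ²)V`. -/
noncomputable def lawZ (ρ : ℝ) : Measure ℝ :=
  Measure.map (fun p : ℝ × ℝ => p.1 * (ρ * p.1 + Real.sqrt (1 - ρ ^ 2) * p.2))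
    ((gaussianReal 0 1).prod (gaussianReal 0 1))

theorem integrable_exp_neg_mul_cosh_mul_exp (ν : ℝ) {y : ℝ} (hy : 0 < y) :
    Integrable (fun t : ℝ => Real.exp (-(y * Real.cosh t)) * Real.exp (ν * t)) := by
  have hgauss : Integrable
      (fun t : ℝ => Real.exp (ν ^ 2 / y) * Real.exp (-(y / 4) * (t - 2 * ν / y) ^ 2)) :=
    ((integrable_exp_neg_mul_sq (by positivity : 0 < y / 4)).comp_sub_right (2 * ν / y)).const_mul _
  refine hgauss.mono' (Continuous.aestronglyMeasurable (by fun_prop)) (ae_of_all _ fun t => ?_)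
  rw [Real.norm_of_nonneg (by positivity), ← Real.exp_add, ← Real.exp_add]
  have hcosh : t ^ 2 / 4 ≤ Real.cosh t := by
    have h := Real.quadratic_le_exp_of_nonneg (abs_nonneg t)
    rw [← Real.cosh_abs, Real.cosh_eq]
    have := Real.exp_pos (-|t|)
    rw [sq_abs] at h
    linarith [abs_nonneg t]
  have hsq : ν ^ 2 / y + -(y / 4) * (t - 2 * ν / y) ^ 2 = -(y * (t ^ 2 / 4)) + ν * t := by
    field_simp
    ring
  rw [hsq]
  gcongr

theorem integral_exp_neg_mul_cosh_mul_exp (ν : ℝ) {y : ℝ} (hy : 0 < y) :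
    ∫ t : ℝ, Real.exp (-(y * Real.cosh t)) * Real.exp (ν * t) = 2 * besselK ν y := by
  have hint := integrable_exp_neg_mul_cosh_mul_exp ν hy
  rw [← intervalIntegral.integral_Iic_add_Ioi hint.integrableOn hint.integrableOn (b := 0),
    ← neg_zero, ← integral_comp_neg_Ioi, neg_zero, ← integral_add, besselK, ← integral_const_mul]
  · refine integral_congr_ae (ae_of_all _ fun t => ?_)
    simp only [Real.cosh_neg, mul_neg, Real.cosh_eq (ν * t)]
    ring
  · exact hint.comp_neg.integrableOn
  · exact hint.integrableOn

theorem setLIntegral_Ioi_eq_lintegral_mul_exp {c : ℝ} (hc : 0 < c) (g : ℝ → ENNReal) :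
    ∫⁻ s in Set.Ioi (0 : ℝ), g s =
      ∫⁻ t : ℝ, ENNReal.ofReal (c * Real.exp t) * g (c * Real.exp t) := by
  have himage : (fun t : ℝ => c * Real.exp t) '' Set.univ = Set.Ioi 0 := by
    rw [← Set.image_image (fun x => c * x) Real.exp, Set.image_univ, Real.range_exp,
      Set.image_mul_left_Ioi hc, mul_zero]
  rw [← himage, lintegral_image_eq_lintegral_abs_deriv_mul MeasurableSet.univ
    (fun t _ => ((Real.hasDerivAt_exp t).const_mul c).hasDerivWithinAt)
    ((mul_right_injective₀ hc.ne').comp Real.exp_injective).injOn, setLIntegral_univ]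
  refine lintegral_congr fun t => ?_
  rw [abs_of_pos (by positivity)]

theorem mgf_sq_gaussianReal {t : ℝ} (ht : t < 1 / 2) :
    mgf (fun x => x ^ 2) (gaussianReal 0 1) t = (1 - 2 * t) ^ (-(1 / 2) : ℝ) := by
  have h1 : (0 : ℝ) < 1 - 2 * t := by linarith
  have h : ∀ x : ℝ, gaussianPDFReal 0 1 x • Real.exp (t * x ^ 2) =
      (√(2 * Real.pi))⁻¹ * Real.exp (-(1 / 2 - t) * x ^ 2) := by
    intro x
    simp only [gaussianPDFReal, NNReal.coe_one, mul_one, sub_zero, smul_eq_mul, mul_assoc,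
      ← Real.exp_add]
    congr 2
    ring
  rw [mgf, integral_gaussianReal_eq_integral_smul one_ne_zero]
  simp_rw [h]
  rw [integral_const_mul, integral_gaussian, Real.rpow_neg h1.le, ← Real.sqrt_eq_rpow,
    ← Real.sqrt_inv, ← Real.sqrt_inv, ← Real.sqrt_mul (by positivity)]
  congr 1
  have h2 : (1 / 2 - t) ≠ 0 := by linarith
  field_simp

theorem mgf_gammaMeasure {a r t : ℝ} (ha : 0 < a) (hr : 0 < r) (ht : t < r) :
    mgf id (gammaMeasure a r) t = (r / (r - t)) ^ a := by
  have h1 : (0 : ℝ) < r - t := by linarith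
  have hG := (Real.Gamma_pos_of_pos ha).ne'
  rw [mgf, gammaMeasure, integral_withDensity_eq_integral_toReal_smul
    (show Measurable (gammaPDF a r) from (measurable_gammaPDFReal a r).ennreal_ofReal)
    (ae_of_all _ fun _ => ENNReal.ofReal_lt_top)]
  have h : ∀ x : ℝ, (gammaPDF a r x).toReal • Real.exp (t * id x) =
      (Set.Ici 0).indicator (fun x => r ^ a / Real.Gamma a *
        (x ^ (a - 1) * Real.exp (-((r - t) * x)))) x := by
    intro x
    rw [gammaPDF, ENNReal.toReal_ofReal (gammaPDFReal_nonneg ha hr x)]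
    by_cases hx : 0 ≤ x
    · rw [Set.indicator_of_mem (Set.mem_Ici.2 hx), gammaPDFReal, if_pos hx, smul_eq_mul, mul_assoc,
        mul_assoc, ← Real.exp_add, id]
      congr 3
      ring
    · rw [Set.indicator_of_notMem (by simpa using hx), gammaPDFReal, if_neg hx, zero_smul]
  simp_rw [h]
  rw [integral_indicator measurableSet_Ici, integral_Ici_eq_integral_Ioi, integral_const_mul,
    Real.integral_rpow_mul_exp_neg_mul_Ioi ha h1, Real.div_rpow hr.le h1.le,
    Real.div_rpow zero_le_one h1.le, Real.one_rpow]
  field_simp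

theorem Iio_subset_integrableExpSet {Ω : Type*} [MeasurableSpace Ω] {X : Ω → ℝ} {μ : Measure Ω}
    {r : ℝ} (h : ∀ t < r, mgf X μ t ≠ 0) :
    Set.Iio r ⊆ interior (integrableExpSet X μ) :=
  isOpen_Iio.subset_interior_iff.2 fun t ht => not_not.1 fun h' => h t ht (integral_undef h')

/-- The complex form of the fact that the sum of squares of `n` independent standard normals has
the gamma law of shape `n / 2` and rate `1 / 2`. -/
theorem complexMGF_gammaMeasure_eq_pow {n : ℕ} (hn : 1 ≤ n) {z : ℂ} (hz : z.re < 1 / 2) :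
    complexMGF id (gammaMeasure ((n : ℝ) / 2) (1 / 2)) z =
      complexMGF (fun x => x ^ 2) (gaussianReal 0 1) z ^ n := by
  have hn' : (0 : ℝ) < (n : ℝ) / 2 := by positivity
  have hγ : ∀ t : ℝ, t < 1 / 2 → mgf id (gammaMeasure ((n : ℝ) / 2) (1 / 2)) t =
      (1 - 2 * t) ^ (-(1 / 2) * n : ℝ) := by
    intro t ht
    have h1 : (0 : ℝ) < 1 - 2 * t := by linarith
    rw [mgf_gammaMeasure hn' (by norm_num) ht,
      show (1 / 2 / (1 / 2 - t) : ℝ) = (1 - 2 * t)⁻¹ by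
        have h2 : (1 / 2 - t) ≠ 0 := by linarith
        field_simp, Real.inv_rpow h1.le, ← Real.rpow_neg h1.le]
    congr 1
    ring
  have hpos : ∀ t : ℝ, t < 1 / 2 → (0 : ℝ) < 1 - 2 * t := fun t ht => by linarith
  have hsub1 := Iio_subset_integrableExpSet (X := id)
    (μ := gammaMeasure ((n : ℝ) / 2) (1 / 2)) (r := 1 / 2) fun t ht => by
      rw [hγ t ht]; exact (Real.rpow_pos_of_pos (hpos t ht) _).ne'
  have hsub2 := Iio_subset_integrableExpSet (X := fun x : ℝ => x ^ 2)
    (μ := gaussianReal 0 1) (r := 1 / 2) fun t ht => by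
      rw [mgf_sq_gaussianReal ht]; exact (Real.rpow_pos_of_pos (hpos t ht) _).ne'
  have hana1 : AnalyticOnNhd ℂ (complexMGF id (gammaMeasure ((n : ℝ) / 2) (1 / 2)))
      {z | z.re < 1 / 2} := analyticOnNhd_complexMGF.mono fun z hz => hsub1 hz
  have hana2 : AnalyticOnNhd ℂ (complexMGF (fun x => x ^ 2) (gaussianReal 0 1))
      {z | z.re < 1 / 2} := analyticOnNhd_complexMGF.mono fun z hz => hsub2 hz
  refine hana1.eqOn_of_preconnected_of_frequently_eq (hana2.pow n)
    (convex_halfSpace_re_lt _).isPreconnected (z₀ := 0) (by simp) ?_ hz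
  have hreal : ∃ᶠ x : ℝ in nhdsWithin 0 {0}ᶜ,
      complexMGF id (gammaMeasure ((n : ℝ) / 2) (1 / 2)) x =
        (complexMGF (fun x => x ^ 2) (gaussianReal 0 1) ^ n) x := by
    refine Filter.Eventually.frequently ?_
    filter_upwards [mem_nhdsWithin_of_mem_nhds (Iio_mem_nhds (by norm_num : (0 : ℝ) < 1 / 2))]
      with t ht
    rw [Pi.pow_apply, complexMGF_ofReal, complexMGF_ofReal, hγ t ht, mgf_sq_gaussianReal ht,
      Real.rpow_mul_natCast (hpos t ht).le]
    norm_cast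
  refine Filter.Tendsto.frequently (f := fun x : ℝ => (x : ℂ)) ?_ hreal
  refine tendsto_nhdsWithin_iff.2 ⟨?_, ?_⟩
  · exact (Complex.continuous_ofReal.tendsto' 0 0 (by simp)).mono_left nhdsWithin_le_nhds
  · filter_upwards [self_mem_nhdsWithin] with x hx
    simpa using hx

theorem charFun_map_add_mul_prod_gaussianReal (μ : Measure ℝ) [IsProbabilityMeasure μ]
    {a b : ℝ → ℝ} (ha : Measurable a) (hb : Measurable b) (t : ℝ) :
    charFun ((μ.prod (gaussianReal 0 1)).map (fun p : ℝ × ℝ => a p.1 + b p.1 * p.2)) t =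
      ∫ x, Complex.exp (t * a x * Complex.I - (t * b x) ^ 2 / 2) ∂μ := by
  rw [charFun_apply_real, integral_map (by fun_prop) (by fun_prop), integral_prod]
  · refine integral_congr_ae (ae_of_all _ fun x => ?_)
    have h : ∀ v : ℝ, Complex.exp (t * ((a x + b x * v : ℝ) : ℂ) * Complex.I) =
        Complex.exp (t * a x * Complex.I) * Complex.exp ((t * b x : ℝ) * v * Complex.I) := by
      intro v
      rw [← Complex.exp_add]
      push_cast
      ring_nf
    simp_rw [h]
    rw [integral_const_mul, ← charFun_apply_real, charFun_gaussianReal, ← Complex.exp_add]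
    push_cast
    ring_nf
  · refine Integrable.of_bound (C := 1) (by fun_prop) (ae_of_all _ fun p => ?_)
    rw [← Complex.ofReal_mul, Complex.norm_exp_ofReal_mul_I]

theorem map_add_mul_prod_gaussianReal_eq_withDensity (μ : Measure ℝ) [IsProbabilityMeasure μ]
    {a b : ℝ → ℝ} (ha : Measurable a) (hb : Measurable b) (hb0 : ∀ᵐ s ∂μ, b s ≠ 0) :
    (μ.prod (gaussianReal 0 1)).map (fun p : ℝ × ℝ => a p.1 + b p.1 * p.2) =
      volume.withDensity (fun z => ∫⁻ s, gaussianPDF (a s) (b s ^ 2).toNNReal z ∂μ) := by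
  ext A hA
  have hmeas : Measurable (fun p : ℝ × ℝ => a p.1 + b p.1 * p.2) := by fun_prop
  have hpdf : Measurable (fun p : ℝ × ℝ => gaussianPDF (a p.1) (b p.1 ^ 2).toNNReal p.2) :=
    measurable_uncurry_gaussianPDF.comp (f := fun p : ℝ × ℝ =>
      ((a p.1, (b p.1 ^ 2).toNNReal, p.2) : ℝ × NNReal × ℝ)) (by fun_prop)
  rw [Measure.map_apply hmeas hA, Measure.prod_apply (hmeas hA), withDensity_apply _ hA,
    ← lintegral_lintegral_swap hpdf.aemeasurable]
  refine lintegral_congr_ae (hb0.mono fun s hs => ?_)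
  have hmap : (gaussianReal 0 1).map (fun v => a s + b s * v) =
      gaussianReal (a s) (b s ^ 2).toNNReal := by
    rw [← Function.comp_def (fun v => a s + v), ← Measure.map_map (by fun_prop) (by fun_prop),
      gaussianReal_map_const_mul, gaussianReal_map_const_add]
    congr 1
    · ring
    · rw [mul_one, Real.toNNReal_of_nonneg (sq_nonneg _)]
  have hvar : (b s ^ 2).toNNReal ≠ 0 := by
    rw [ne_eq, Real.toNNReal_eq_zero, not_le]
    positivity
  simp only
  rw [← gaussianReal_apply _ hvar, ← hmap, Measure.map_apply (by fun_prop) hA]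
  rfl

theorem gammaMeasure_eq_restrict_Ioi_withDensity (a r : ℝ) :
    gammaMeasure a r = (volume.restrict (Set.Ioi 0)).withDensity (fun x => ENNReal.ofReal
      (r ^ a / Real.Gamma a * x ^ (a - 1) * Real.exp (-(r * x)))) := by
  rw [gammaMeasure, Measure.restrict_congr_set Ioi_ae_eq_Ici,
    ← withDensity_indicator measurableSet_Ici]
  congr 1
  ext x
  by_cases hx : 0 ≤ x
  · rw [Set.indicator_of_mem (Set.mem_Ici.2 hx), gammaPDF_of_nonneg hx]
  · rw [Set.indicator_of_notMem (by simpa using hx), gammaPDF_of_neg (not_le.1 hx)]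

theorem ae_gammaMeasure_pos (a r : ℝ) : ∀ᵐ s ∂gammaMeasure a r, 0 < s := by
  rw [gammaMeasure_eq_restrict_Ioi_withDensity]
  exact (withDensity_absolutelyContinuous _ _).ae_le (ae_restrict_mem measurableSet_Ioi)

/-- After the substitution `s = n |x| exp t`, the gamma-weighted Gaussian density becomes the
integrand of the Bessel function. -/
theorem mul_gamma_density_mul_gaussianPDFReal {ρ : ℝ} (hd : 0 < 1 - ρ ^ 2) {n : ℕ} (hn : 1 ≤ n)
    {x : ℝ} (hx : x ≠ 0) (t : ℝ) {s : ℝ} (hs : s = n * |x| * Real.exp t) :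
    s * (((1 / 2) ^ ((n : ℝ) / 2) / Real.Gamma ((n : ℝ) / 2) * s ^ ((n : ℝ) / 2 - 1) *
        Real.exp (-(1 / 2 * s))) *
      gaussianPDFReal (ρ * s / n) ((√(1 - ρ ^ 2) * √s / n) ^ 2).toNNReal x) =
    (n / √(2 * Real.pi * (1 - ρ ^ 2)) *
        ((1 / 2) ^ ((n : ℝ) / 2) / Real.Gamma ((n : ℝ) / 2)) *
        (n * |x|) ^ (((n : ℝ) - 1) / 2) * Real.exp (ρ * n * x / (1 - ρ ^ 2))) *
      (Real.exp (-(n * |x| / (1 - ρ ^ 2) * Real.cosh t)) *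
        Real.exp (((n : ℝ) - 1) / 2 * t)) := by
  have hn0 : (0 : ℝ) < n := by positivity
  have hm : 0 < n * |x| := by positivity
  have hs0 : 0 < s := by rw [hs]; positivity
  have hpow : s * s ^ ((n : ℝ) / 2 - 1) =
      √s * ((n * |x|) ^ (((n : ℝ) - 1) / 2) * Real.exp (((n : ℝ) - 1) / 2 * t)) := by
    rw [mul_comm (((n : ℝ) - 1) / 2) t, Real.exp_mul, ← Real.mul_rpow hm.le (by positivity), ← hs,
      Real.sqrt_eq_rpow, ← Real.rpow_add hs0]
    nth_rewrite 1 [← Real.rpow_one s]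
    rw [← Real.rpow_add hs0]
    congr 1
    ring
  have hvar : (√(1 - ρ ^ 2) * √s / n) ^ 2 = (1 - ρ ^ 2) * s / n ^ 2 := by
    rw [div_pow, mul_pow, Real.sq_sqrt hd.le, Real.sq_sqrt hs0.le]
  have hroot : √(2 * Real.pi * ((1 - ρ ^ 2) * s / n ^ 2)) =
      √(2 * Real.pi * (1 - ρ ^ 2)) * √s / n := by
    rw [← Real.sqrt_mul (by positivity), ← mul_div_assoc, Real.sqrt_div' _ (by positivity),
      Real.sqrt_sq hn0.le, mul_assoc (2 * Real.pi)]
  have hexp : Real.exp (-(1 / 2 * s)) *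
      Real.exp (-(x - ρ * s / n) ^ 2 / (2 * ((1 - ρ ^ 2) * s / n ^ 2))) =
      Real.exp (ρ * n * x / (1 - ρ ^ 2)) *
        Real.exp (-(n * |x| / (1 - ρ ^ 2) * Real.cosh t)) := by
    rw [← Real.exp_add, ← Real.exp_add]
    congr 1
    have hxs : n ^ 2 * x ^ 2 = s * (n * |x| * Real.exp (-t)) := by
      rw [hs, ← sq_abs x, Real.exp_neg]
      field_simp
    have hcosh : n * |x| * Real.cosh t = (s + n * |x| * Real.exp (-t)) / 2 := by
      rw [hs, Real.cosh_eq]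
      ring
    rw [div_mul_eq_mul_div (n * |x|), hcosh]
    have hd' := hd.ne'
    generalize n * |x| * Real.exp (-t) = w at hxs
    field_simp
    linear_combination (-1 : ℝ) * hxs
  rw [gaussianPDFReal, Real.coe_toNNReal _ (sq_nonneg _), hvar, hroot]
  calc _ = (s * s ^ ((n : ℝ) / 2 - 1)) *
        ((1 / 2) ^ ((n : ℝ) / 2) / Real.Gamma ((n : ℝ) / 2)) *
        (√(2 * Real.pi * (1 - ρ ^ 2)) * √s / n)⁻¹ * (Real.exp (-(1 / 2 * s)) *
      Real.exp (-(x - ρ * s / n) ^ 2 / (2 * ((1 - ρ ^ 2) * s / n ^ 2)))) := by ring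
    _ = _ := by
      have := Real.sqrt_pos.2 hs0
      rw [hpow, hexp]
      field_simp

theorem lintegral_gaussianPDF_gammaMeasure {ρ : ℝ} (hd : 0 < 1 - ρ ^ 2) {n : ℕ} (hn : 1 ≤ n)
    {x : ℝ} (hx : x ≠ 0) :
    ∫⁻ s, gaussianPDF (ρ * s / n) ((√(1 - ρ ^ 2) * √s / n) ^ 2).toNNReal x
        ∂gammaMeasure ((n : ℝ) / 2) (1 / 2) =
      ENNReal.ofReal
        ((n : ℝ) ^ (((n : ℝ) + 1) / 2) * 2 ^ ((1 - (n : ℝ)) / 2) * |x| ^ (((n : ℝ) - 1) / 2) /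
          (√(Real.pi * (1 - ρ ^ 2)) * Real.Gamma ((n : ℝ) / 2)) *
        Real.exp (ρ * n * x / (1 - ρ ^ 2)) *
        besselK (((n : ℝ) - 1) / 2) (n * |x| / (1 - ρ ^ 2))) := by
  have hn0 : (0 : ℝ) < n := by positivity
  have hm : 0 < n * |x| := by positivity
  have hΓ : 0 < Real.Gamma ((n : ℝ) / 2) := Real.Gamma_pos_of_pos (by positivity)
  have hy : 0 < n * |x| / (1 - ρ ^ 2) := by positivity
  have hpdf : Measurable
      (fun s => gaussianPDF (ρ * s / n) ((√(1 - ρ ^ 2) * √s / n) ^ 2).toNNReal x) :=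
    measurable_uncurry_gaussianPDF.comp (f := fun s : ℝ =>
      ((ρ * s / n, ((√(1 - ρ ^ 2) * √s / n) ^ 2).toNNReal, x) : ℝ × NNReal × ℝ)) (by fun_prop)
  rw [gammaMeasure_eq_restrict_Ioi_withDensity,
    lintegral_withDensity_eq_lintegral_mul _ (by fun_prop) hpdf,
    setLIntegral_Ioi_eq_lintegral_mul_exp hm]
  simp only [Pi.mul_apply, gaussianPDF]
  set C : ℝ := n / √(2 * Real.pi * (1 - ρ ^ 2)) *
    ((1 / 2) ^ ((n : ℝ) / 2) / Real.Gamma ((n : ℝ) / 2)) *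
    (n * |x|) ^ (((n : ℝ) - 1) / 2) * Real.exp (ρ * n * x / (1 - ρ ^ 2)) with hC
  have hC0 : 0 ≤ C := by positivity
  rw [lintegral_congr (g := fun t => ENNReal.ofReal C * ENNReal.ofReal
      (Real.exp (-(n * |x| / (1 - ρ ^ 2) * Real.cosh t)) * Real.exp (((n : ℝ) - 1) / 2 * t)))
      fun t => by
        rw [← ENNReal.ofReal_mul (by positivity), ← ENNReal.ofReal_mul (by positivity),
          mul_gamma_density_mul_gaussianPDFReal hd hn hx t rfl, ENNReal.ofReal_mul hC0],
    lintegral_const_mul _ (by fun_prop),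
    ← ofReal_integral_eq_lintegral_ofReal (integrable_exp_neg_mul_cosh_mul_exp _ hy)
      (ae_of_all _ fun t => by positivity),
    integral_exp_neg_mul_cosh_mul_exp _ hy, ← ENNReal.ofReal_mul hC0, hC]
  congr 1
  have hn_pow : (n : ℝ) ^ (((n : ℝ) + 1) / 2) = n * (n : ℝ) ^ (((n : ℝ) - 1) / 2) := by
    nth_rewrite 3 [← Real.rpow_one (n : ℝ)]
    rw [← Real.rpow_add hn0]
    congr 1
    ring
  have htwo_pow : (2 : ℝ) ^ ((1 - (n : ℝ)) / 2) = √2 * (1 / 2) ^ ((n : ℝ) / 2) := by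
    rw [one_div, Real.inv_rpow (by norm_num), ← Real.rpow_neg (by norm_num), Real.sqrt_eq_rpow,
      ← Real.rpow_add (by norm_num)]
    congr 1
    ring
  have hroot : √(2 * Real.pi * (1 - ρ ^ 2)) = √2 * √(Real.pi * (1 - ρ ^ 2)) := by
    rw [mul_assoc, Real.sqrt_mul (by norm_num)]
  have hroot_pos : 0 < √(Real.pi * (1 - ρ ^ 2)) := by positivity
  rw [hn_pow, htwo_pow, hroot, Real.mul_rpow hn0.le (abs_nonneg x)]
  have hsq : √2 * √2 = (2 : ℝ) := Real.mul_self_sqrt (by norm_num)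
  have h2 : 0 < √(2 : ℝ) := by positivity
  generalize √(2 : ℝ) = q at hsq h2
  rw [← hsq]
  field_simp

theorem ofReal_sqrt_sq {x : ℝ} (hx : 0 ≤ x) : ((√x : ℝ) : ℂ) ^ 2 = x := by
  rw [← Complex.ofReal_pow, Real.sq_sqrt hx]

theorem charFun_lawZ {ρ : ℝ} (hd : 0 < 1 - ρ ^ 2) (t : ℝ) :
    charFun (lawZ ρ) t = complexMGF (fun x => x ^ 2) (gaussianReal 0 1)
      (t * ρ * Complex.I - t ^ 2 * (1 - ρ ^ 2) / 2) := by
  have hfun : (fun p : ℝ × ℝ => p.1 * (ρ * p.1 + √(1 - ρ ^ 2) * p.2)) =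
      fun p => ρ * p.1 ^ 2 + √(1 - ρ ^ 2) * p.1 * p.2 := by
    ext p
    ring
  have hsqrt : ((√(1 - ρ ^ 2) : ℝ) : ℂ) ^ 2 = 1 - ρ ^ 2 := by
    simpa using ofReal_sqrt_sq hd.le
  rw [lawZ, hfun, charFun_map_add_mul_prod_gaussianReal _ (a := fun x => ρ * x ^ 2)
    (b := fun x => √(1 - ρ ^ 2) * x) (by fun_prop) (by fun_prop), complexMGF]
  refine integral_congr_ae (ae_of_all _ fun x => ?_)
  simp only
  congr 1
  push_cast
  rw [mul_pow, mul_pow, hsqrt]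
  ring

theorem charFun_gaussian_gamma_mixture {ρ : ℝ} (hd : 0 < 1 - ρ ^ 2) {n : ℕ} (hn : 1 ≤ n) (t : ℝ) :
    charFun (((gammaMeasure ((n : ℝ) / 2) (1 / 2)).prod (gaussianReal 0 1)).map
        (fun p : ℝ × ℝ => ρ * p.1 / n + √(1 - ρ ^ 2) * √p.1 / n * p.2)) t =
      charFun (lawZ ρ) ((n : ℝ)⁻¹ * t) ^ n := by
  have := isProbabilityMeasure_gammaMeasure (a := (n : ℝ) / 2) (r := 1 / 2) (by positivity)
    (by norm_num)
  have hre : (((((n : ℝ)⁻¹ * t : ℝ) : ℂ) * ρ * Complex.I -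
      (((n : ℝ)⁻¹ * t : ℝ) : ℂ) ^ 2 * (1 - ρ ^ 2) / 2 : ℂ)).re < 1 / 2 := by
    have hre_eq : (((((n : ℝ)⁻¹ * t : ℝ) : ℂ) * ρ * Complex.I -
        (((n : ℝ)⁻¹ * t : ℝ) : ℂ) ^ 2 * (1 - ρ ^ 2) / 2 : ℂ)).re =
        -(((n : ℝ)⁻¹ * t) ^ 2 * (1 - ρ ^ 2) / 2) := by
      generalize (n : ℝ)⁻¹ * t = u
      rw [show (u * ρ * Complex.I - (u : ℂ) ^ 2 * (1 - ρ ^ 2) / 2 : ℂ) =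
        ((-(u ^ 2 * (1 - ρ ^ 2) / 2) : ℝ) : ℂ) + ((u * ρ : ℝ) : ℂ) * Complex.I by push_cast; ring]
      rw [Complex.add_re, Complex.re_ofReal_mul, Complex.I_re, mul_zero, add_zero,
        Complex.ofReal_re]
    rw [hre_eq]
    have : 0 ≤ ((n : ℝ)⁻¹ * t) ^ 2 * (1 - ρ ^ 2) / 2 := by positivity
    linarith
  rw [charFun_lawZ hd, ← complexMGF_gammaMeasure_eq_pow hn hre,
    charFun_map_add_mul_prod_gaussianReal _ (a := fun s => ρ * s / n)
      (b := fun s => √(1 - ρ ^ 2) * √s / n) (by fun_prop) (by fun_prop), complexMGF]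
  refine integral_congr_ae ((ae_gammaMeasure_pos _ _).mono fun s hs => ?_)
  have hsqrt : ((√(1 - ρ ^ 2) : ℝ) : ℂ) ^ 2 = 1 - ρ ^ 2 := by
    simpa using ofReal_sqrt_sq hd.le
  simp only
  congr 1
  push_cast
  rw [mul_pow, div_pow, mul_pow _ ((√s : ℝ) : ℂ), hsqrt, ofReal_sqrt_sq hs.le, id]
  ring

/-- Unit-variance case of the main result of Nadarajah and Pogány: the mean
`Z̄ = (Z₁ + ⋯ + Zₙ)/n` of `n ≥ 1` i.i.d. copies of the product `Z = XY` of zero mean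
correlated normals has law absolutely continuous with respect to Lebesgue measure, with
density `p(x) = n^{(n+1)/2} 2^{(1−n)/2} |x|^{(n−1)/2} / (√(π(1 − ρ²)) Γ(n/2))
· e^{ρnx/(1 − ρ²)} K_{(n−1)/2}(n|x|/(1 − ρ²))`. -/
theorem mean_product_normal_density
    {Ω : Type*} [MeasurableSpace Ω] (P : Measure Ω) [IsProbabilityMeasure P]
    (ρ : ℝ) (hρ : ρ ∈ Set.Ioo (-1 : ℝ) 1) (n : ℕ) (hn : 1 ≤ n)
    (Zs : Fin n → Ω → ℝ) (hmeas : ∀ i, Measurable (Zs i))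
    (hindep : iIndepFun Zs P)
    (hlaw : ∀ i, P.map (Zs i) = lawZ ρ)
    (Zbar : Ω → ℝ) (hZbar : ∀ ω, Zbar ω = (∑ i, Zs i ω) / n) :
    P.map Zbar = volume.withDensity (fun x => ENNReal.ofReal
      ((n : ℝ) ^ (((n : ℝ) + 1) / 2) * 2 ^ ((1 - (n : ℝ)) / 2) * |x| ^ (((n : ℝ) - 1) / 2) /
          (Real.sqrt (Real.pi * (1 - ρ ^ 2)) * Real.Gamma ((n : ℝ) / 2)) *
        Real.exp (ρ * n * x / (1 - ρ ^ 2)) *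
        besselK (((n : ℝ) - 1) / 2) (n * |x| / (1 - ρ ^ 2)))) := by
  have hd : 0 < 1 - ρ ^ 2 := by nlinarith [hρ.1, hρ.2]
  have hn0 : (0 : ℝ) < n := by positivity
  have hγ := isProbabilityMeasure_gammaMeasure (a := (n : ℝ) / 2) (r := 1 / 2) (by positivity)
    (by norm_num)
  have hZ : Zbar = fun ω => (n : ℝ)⁻¹ * ∑ i, Zs i ω := by
    ext ω
    rw [hZbar, div_eq_inv_mul]
  have hsum : Measurable fun ω => ∑ i, Zs i ω := by fun_prop
  have hZmeas : Measurable Zbar := by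
    rw [hZ]
    fun_prop
  have := Measure.isProbabilityMeasure_map (μ := P) hZmeas.aemeasurable
  have hmix : P.map Zbar = ((gammaMeasure ((n : ℝ) / 2) (1 / 2)).prod (gaussianReal 0 1)).map
      (fun p : ℝ × ℝ => ρ * p.1 / n + √(1 - ρ ^ 2) * √p.1 / n * p.2) := by
    refine Measure.ext_of_charFun (funext fun t => ?_)
    rw [charFun_gaussian_gamma_mixture hd hn, hZ, charFun_map_mul_comp hsum.aemeasurable,
      hindep.charFun_map_fun_sum_eq_prod fun i => (hmeas i).aemeasurable]
    simp [hlaw]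
  rw [hmix, map_add_mul_prod_gaussianReal_eq_withDensity _ (a := fun s => ρ * s / n)
    (b := fun s => √(1 - ρ ^ 2) * √s / n) (by fun_prop) (by fun_prop)
    ((ae_gammaMeasure_pos _ _).mono fun s hs => by positivity)]
  refine withDensity_congr_ae ?_
  filter_upwards [Measure.ae_ne volume (0 : ℝ)] with x hx
  exact lintegral_gaussianPDF_gammaMeasure hd hn hx
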